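/- arXiv:1312.0298 — 8 statements merged into one kernel-verified Lean document; each statement's English description precedes it below -/
import Mathlib

section
/- Let p be a prime, let a be an element of ZMod p, and let G be the quadratic orbital network on ZMod p with one generator T(x) = x^2 + a. Then the Euler characteristic of G is nonnegative: χ(G) ≥ 0. -/
/-!
Only the fact that `x ↦ x ^ 2 + a` is a function matters. In the graph whose edges are the pairs
`{x, T x}` with `T x ≠ x`, every edge is named by one of its endpoints, so there are at most as many
edges as vertices. A `K₄` would need six edges named by its four vertices, so the graph has no clique
on four or more vertices. Hence `χ = c₀ - c₁ + c₂` with `c₁ ≤ c₀`.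
-/

open scoped Classical

lemma card_cliqueFinset_one {V : Type*} [Fintype V] [DecidableEq V] (G : SimpleGraph V)
    [DecidableRel G.Adj] : (G.cliqueFinset 1).card = Fintype.card V := by
  have h : G.cliqueFinset 1 = Finset.univ.image (fun x : V => ({x} : Finset V)) := by
    ext s
    simp [SimpleGraph.mem_cliqueFinset_iff, eq_comm]
  rw [h, Finset.card_image_of_injective _ Finset.singleton_injective, Finset.card_univ]

/-- Each edge has the form `{x, T x}`, so the edges are covered by the image of the vertices. -/
lemma card_cliqueFinset_two_le {V : Type*} [Fintype V] [DecidableEq V] (T : V → V)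
    [DecidableRel (SimpleGraph.fromRel (fun x y : V => y = T x)).Adj] :
    ((SimpleGraph.fromRel (fun x y : V => y = T x)).cliqueFinset 2).card ≤ Fintype.card V := by
  have h : (SimpleGraph.fromRel (fun x y : V => y = T x)).cliqueFinset 2 ⊆
      Finset.univ.image (fun x : V => ({x, T x} : Finset V)) := by
    intro s hs
    rw [SimpleGraph.mem_cliqueFinset_iff, SimpleGraph.isNClique_iff] at hs
    obtain ⟨hc, h2⟩ := hs
    obtain ⟨x, y, hxy, rfl⟩ := Finset.card_eq_two.mp h2
    have hadj := hc (by simp : x ∈ _) (by simp : y ∈ _) hxy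
    rw [SimpleGraph.fromRel_adj] at hadj
    simp only [Finset.mem_image, Finset.mem_univ, true_and]
    rcases hadj.2 with h | h
    · exact ⟨x, by rw [← h]⟩
    · exact ⟨y, by rw [← h, Finset.pair_comm]⟩
  exact (Finset.card_le_card h).trans Finset.card_image_le

/-- A `K₄` has six edges, but each of its vertices `x` accounts only for the edge `{x, T x}`. -/
lemma cliqueFree_four_fromRel {V : Type*} (T : V → V) :
    (SimpleGraph.fromRel (fun x y : V => y = T x)).CliqueFree 4 := by
  intro s hs
  rw [SimpleGraph.isNClique_iff] at hs
  obtain ⟨hc, h4⟩ := hs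
  obtain ⟨w, x, y, z, hwx, hwy, hwz, hxy, hxz, hyz, rfl⟩ := Finset.card_eq_four.mp h4
  have key : ∀ u ∈ ({w, x, y, z} : Finset V), ∀ v ∈ ({w, x, y, z} : Finset V), u ≠ v →
      v = T u ∨ u = T v := fun u hu v hv huv =>
    ((SimpleGraph.fromRel_adj _ _ _).mp (hc hu hv huv)).2
  have e₁ := key w (by simp) x (by simp) hwx
  have e₂ := key w (by simp) y (by simp) hwy
  have e₃ := key w (by simp) z (by simp) hwz
  have e₄ := key x (by simp) y (by simp) hxy
  have e₅ := key x (by simp) z (by simp) hxz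
  have e₆ := key y (by simp) z (by simp) hyz
  clear key hc h4
  grind

/-- The Euler characteristic of the quadratic orbital network on `ZMod p` with one
generator `T x = x^2 + a` is nonnegative. -/
theorem stmt_0 (p : ℕ) [Fact p.Prime] (a : ZMod p) :
    0 ≤ ∑ k ∈ Finset.range (p + 1), (-1 : ℤ) ^ k *
      (((SimpleGraph.fromRel (fun x y : ZMod p => y = x ^ 2 + a)).cliqueFinset (k + 1)).card : ℤ) := by
  have hp : 3 ≤ p + 1 := by have := (Fact.out : p.Prime).two_le; omega
  -- Cliques on at least four vertices do not occur, so the sum stops at triangles.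
  rw [← Finset.sum_subset (Finset.range_mono hp)]
  · have h1 := card_cliqueFinset_one (SimpleGraph.fromRel (fun x y : ZMod p => y = x ^ 2 + a))
    have h2 := card_cliqueFinset_two_le (fun x : ZMod p => x ^ 2 + a)
    simp only [Finset.sum_range_succ, Finset.sum_range_zero]
    norm_num
    omega
  · intro k _ hk
    have hk : 4 ≤ k + 1 := by
      rw [Finset.mem_range] at hk
      omega
    have hfree := (cliqueFree_four_fromRel (fun x : ZMod p => x ^ 2 + a)).mono hk
    rw [SimpleGraph.cliqueFinset_eq_empty_iff.mpr hfree]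
    simp
end

section
/- Let p be a prime, let a be an element of ZMod p, and let G be the quadratic orbital network on ZMod p with one generator T(x) = x^2 + a. Then G contains at most 2 triangles, i.e., the number of 3-cliques of G is at most 2. -/
/-!
Put `T x = x ^ 2 + a`. Every vertex is the tail of at most one directed edge `x → T x`, so the
three edges of a triangle have three distinct tails, and the triangle is a `3`-cycle of `T`:
it equals `{x, T x, T (T x)}` for each of its vertices `x`, with `T (T (T x)) = x` and `T x ≠ x`
(`triangle_eq_orbit`). Hence distinct triangles are disjoint. Moreover `T x - x` divides
`T (T (T x)) - x` as a polynomial in `x`, and the quotient (the third dynatomic polynomial of `T`)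
is monic of degree `6`, so it has at most `6` roots. All vertices of triangles are such roots;
thus three times the number of triangles is at most `6`.
-/

open scoped Classical

/-- In the graph of a self-map `T`, every triangle is a `3`-cycle of `T`, described here from
any of its vertices. -/
lemma triangle_eq_orbit {V : Type*} (T : V → V) (s : Finset V)
    (hs : (SimpleGraph.fromRel (fun x y : V => y = T x)).IsNClique 3 s) (x : V) (hx : x ∈ s) :
    s = {x, T x, T (T x)} ∧ T x ≠ x ∧ T (T (T x)) = x := by
  obtain ⟨u, v, w, huv, huw, hvw, rfl⟩ := SimpleGraph.is3Clique_iff.1 hs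
  simp only [SimpleGraph.fromRel_adj] at huv huw hvw
  -- Each vertex is the tail of exactly one edge, which leaves the two cyclic orientations.
  have key : (v = T u ∧ w = T v ∧ u = T w) ∨ (w = T u ∧ v = T w ∧ u = T v) := by grind
  simp only [Finset.mem_insert, Finset.mem_singleton] at hx
  refine ⟨?_, by grind, by grind⟩
  ext z
  simp only [Finset.mem_insert, Finset.mem_singleton]
  grind

open Polynomial in
/-- The third dynatomic polynomial of `x ↦ x ^ 2 + a`, that is
`(T (T (T X)) - X) / (T X - X)`. -/
noncomputable def dynatomicThree {R : Type*} [CommRing R] (a : R) : R[X] :=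
  X ^ 6 + X ^ 5 + C (3 * a + 1) * X ^ 4 + C (2 * a + 1) * X ^ 3 + C (3 * a ^ 2 + 3 * a + 1) * X ^ 2
    + C (a ^ 2 + 2 * a + 1) * X + C (a ^ 3 + 2 * a ^ 2 + a + 1)

lemma natDegree_dynatomicThree {R : Type*} [CommRing R] [Nontrivial R] (a : R) :
    (dynatomicThree a).natDegree = 6 := by
  unfold dynatomicThree
  compute_degree!

lemma isRoot_dynatomicThree {R : Type*} [CommRing R] [IsDomain R] (a x : R)
    (h1 : x ^ 2 + a ≠ x) (h3 : ((x ^ 2 + a) ^ 2 + a) ^ 2 + a = x) :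
    (dynatomicThree a).IsRoot x := by
  have h : (x ^ 2 + a - x) * (dynatomicThree a).eval x = 0 := by
    simp only [dynatomicThree, Polynomial.eval_add, Polynomial.eval_mul, Polynomial.eval_pow,
      Polynomial.eval_X, Polynomial.eval_C]
    linear_combination h3
  exact (mul_eq_zero.1 h).resolve_left (sub_ne_zero.2 h1)

/-- The quadratic orbital network on `ZMod p` with one generator `T x = x^2 + a`
contains at most 2 triangles (3-cliques). -/
theorem stmt_1 (p : ℕ) [Fact p.Prime] (a : ZMod p) :
    ((SimpleGraph.fromRel (fun x y : ZMod p => y = x ^ 2 + a)).cliqueFinset 3).card ≤ 2 := by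
  set S := (SimpleGraph.fromRel (fun x y : ZMod p => y = x ^ 2 + a)).cliqueFinset 3 with hS
  have clique : ∀ s ∈ S, (SimpleGraph.fromRel (fun x y : ZMod p => y = x ^ 2 + a)).IsNClique 3 s :=
    fun s hs => SimpleGraph.mem_cliqueFinset_iff.1 hs
  have orbit := fun s hs x hx =>
    triangle_eq_orbit (fun x : ZMod p => x ^ 2 + a) s (clique s hs) x hx
  have disj : (S : Set (Finset (ZMod p))).PairwiseDisjoint id := by
    intro s hs t ht hst
    refine Finset.disjoint_left.2 fun x hxs hxt => hst ?_
    exact (orbit s hs x hxs).1.trans (orbit t ht x hxt).1.symm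
  have hcard : (S.biUnion id).card = S.card * 3 := by
    rw [Finset.card_biUnion disj]
    exact Finset.sum_const_nat fun s hs => (clique s hs).card_eq
  have hne : dynatomicThree a ≠ 0 :=
    Polynomial.ne_zero_of_natDegree_gt (n := 0) (by rw [natDegree_dynatomicThree]; norm_num)
  have hsub : S.biUnion id ⊆ (dynatomicThree a).roots.toFinset := by
    intro x hx
    obtain ⟨s, hs, hxs⟩ := Finset.mem_biUnion.1 hx
    obtain ⟨-, h1, h3⟩ := orbit s hs x hxs
    exact Multiset.mem_toFinset.2 ((Polynomial.mem_roots hne).2 (isRoot_dynatomicThree a x h1 h3))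
  have h6 : (S.biUnion id).card ≤ 6 :=
    calc (S.biUnion id).card ≤ (dynatomicThree a).roots.toFinset.card := Finset.card_le_card hsub
      _ ≤ (dynatomicThree a).roots.card := Multiset.toFinset_card_le _
      _ ≤ (dynatomicThree a).natDegree := Polynomial.card_roots' _
      _ = 6 := natDegree_dynatomicThree a
  omega
end

section
/- Let p be a prime, let a be an element of ZMod p, let T(x) = x^2 + a, and let G be the quadratic orbital network on ZMod p with the one generator T. If {x, y, z} is a triangle of G, then T permutes its three vertices cyclically; in particular every vertex v belonging to a triangle of G satisfies T(T(T(v))) = v. -/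
/-!
Every edge of the graph of a self-map `f` is an arrow `x ⟶ f x`, and each vertex emits only one
arrow. The three edges of a triangle therefore have three different sources, so each vertex is the
source of exactly one of them, and the orientation is one of the two directed 3-cycles. Nothing
about `x ^ 2 + a` is used beyond its being a function.
-/

/-- Of the eight orientations of the three edges, six make some vertex the source of two edges,
which would identify their targets; the other two are the directed 3-cycles. -/
lemma cyclic_of_pairwise_arrows {α : Type*} (f : α → α) {x y z : α}
    (hxy : x ≠ y) (hxz : x ≠ z) (hyz : y ≠ z)
    (exy : y = f x ∨ x = f y) (exz : z = f x ∨ x = f z) (eyz : z = f y ∨ y = f z) :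
    (f x = y ∧ f y = z ∧ f z = x) ∨ (f x = z ∧ f z = y ∧ f y = x) := by
  grind

/-- In the quadratic orbital network on `ZMod p` with one generator `T x = x^2 + a`,
the map `T` permutes the vertices of any triangle cyclically: it maps the triangle into
itself, and every vertex `v` of a triangle satisfies `T (T (T v)) = v`. -/
theorem stmt_2 (p : ℕ) [Fact p.Prime] (a : ZMod p)
    (t : Finset (ZMod p))
    (ht : (SimpleGraph.fromRel (fun x y : ZMod p => y = x ^ 2 + a)).IsNClique 3 t) :
    ∀ v ∈ t, (v ^ 2 + a) ∈ t ∧ ((v ^ 2 + a) ^ 2 + a) ^ 2 + a = v := by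
  obtain ⟨x, y, z, hxy, hxz, hyz, rfl⟩ := SimpleGraph.is3Clique_iff.mp ht
  rw [SimpleGraph.fromRel_adj] at hxy hxz hyz
  have h := cyclic_of_pairwise_arrows (fun x : ZMod p => x ^ 2 + a)
    hxy.1 hxz.1 hyz.1 hxy.2 hxz.2 hyz.2
  intro v hv
  simp only [Finset.mem_insert, Finset.mem_singleton] at hv ⊢
  rcases h with ⟨h₁, h₂, h₃⟩ | ⟨h₁, h₂, h₃⟩ <;> rcases hv with rfl | rfl | rfl <;>
    simp only [h₁, h₂, h₃, true_or, or_true, and_self]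
end

section
/- Let p be a prime, let a be an element of ZMod p, and let G be the quadratic orbital network on ZMod p with one generator T(x) = x^2 + a. Then G contains no complete subgraph K_4, i.e., G is 4-clique-free. -/
/-- The graph of any self-map `f`, with an edge between `x` and `f x`, has no `K₄`: each edge
is of the form `{x, f x}`, so four vertices span at most four edges, whereas `K₄` has six. -/
theorem cliqueFree_four_fromRel_map {V : Type*} (f : V → V) :
    (SimpleGraph.fromRel (fun x y : V => y = f x)).CliqueFree 4 := by
  refine SimpleGraph.cliqueFree_iff.2 ⟨fun e => ?_⟩
  have h : ∀ i j : Fin 4, i ≠ j → e i ≠ e j ∧ (e j = f (e i) ∨ e i = f (e j)) := fun i j hij =>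
    SimpleGraph.fromRel_adj _ _ _ |>.1 (e.toHom.map_adj hij)
  have h01 := h 0 1 (by decide)
  have h02 := h 0 2 (by decide)
  have h03 := h 0 3 (by decide)
  have h12 := h 1 2 (by decide)
  have h13 := h 1 3 (by decide)
  have h23 := h 2 3 (by decide)
  clear h
  -- However the six edges are oriented, one vertex has two of the others as its image.
  grind

/-- The quadratic orbital network on `ZMod p` with one generator `T x = x^2 + a`
contains no complete subgraph `K₄`: it is 4-clique-free. -/
theorem stmt_3 (p : ℕ) [Fact p.Prime] (a : ZMod p) :
    (SimpleGraph.fromRel (fun x y : ZMod p => y = x ^ 2 + a)).CliqueFree 4 :=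
  cliqueFree_four_fromRel_map fun x => x ^ 2 + a
end

section
/- Let p be a prime, let d ≥ 1, let a_1, …, a_d be elements of ZMod p, and let G be the quadratic orbital network on ZMod p with generators T_i(x) = x^2 + a_i for i = 1, …, d. Then G contains no complete subgraph K_{2d+2}, i.e., G is (2d+2)-clique-free. -/
/-- The quadratic orbital network on `ZMod p` with `d ≥ 1` generators
`T i x = x^2 + a i` contains no complete subgraph `K_{2d+2}`: it is `(2d+2)`-clique-free. -/
theorem stmt_5 (p : ℕ) [Fact p.Prime] (d : ℕ) (hd : 1 ≤ d) (a : Fin d → ZMod p) :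
    (SimpleGraph.fromRel
        (fun x y : ZMod p => ∃ i : Fin d, y = x ^ 2 + a i)).CliqueFree (2 * d + 2) := by
  classical
  -- A clique on `n = 2d + 2` vertices has `n(n - 1)` ordered pairs of distinct vertices, each
  -- an arrow `x → x ^ 2 + a i` from a vertex of the clique or the reverse of one, so
  -- `n(2d + 1) ≤ 2nd`, which is absurd.
  rintro s ⟨hs, hcard⟩
  let A : Finset (ZMod p × ZMod p) :=
    (s ×ˢ (Finset.univ : Finset (Fin d))).image fun q => (q.1, q.1 ^ 2 + a q.2)
  have hA : A.card ≤ (2 * d + 2) * d := by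
    refine Finset.card_image_le.trans ?_
    simp [hcard]
  have hsub : s.offDiag ⊆ A ∪ A.image Prod.swap := by
    rintro ⟨x, y⟩ hxy
    obtain ⟨hx, hy, hne⟩ := Finset.mem_offDiag.1 hxy
    obtain ⟨-, ⟨i, hi⟩ | ⟨i, hi⟩⟩ := (SimpleGraph.fromRel_adj _ _ _).1 (hs hx hy hne)
    · exact Finset.mem_union_left _ (Finset.mem_image.2 ⟨(x, i), by simpa using hx, by simpa using hi.symm⟩)
    · exact Finset.mem_union_right _ (Finset.mem_image.2
        ⟨(y, x), Finset.mem_image.2 ⟨(y, i), by simpa using hy, by simpa using hi.symm⟩, rfl⟩)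
  have h1 := Finset.card_le_card hsub
  have h2 := Finset.card_union_le A (A.image Prod.swap)
  have h3 : (A.image Prod.swap).card ≤ A.card := Finset.card_image_le
  have h4 : s.offDiag.card + (2 * d + 2) = (2 * d + 2) * (2 * d + 2) := by
    rw [Finset.offDiag_card, hcard]
    exact Nat.sub_add_cancel (Nat.le_mul_self _)
  nlinarith
end

section
/- Let p be a prime, let a, b be elements of ZMod p, and let G be the quadratic orbital network on ZMod p with the two generators T(x) = x^2 + a and S(x) = x^2 + b. Then G contains no complete subgraph K_6, i.e., G is 6-clique-free. -/
/-!
A directed edge `x → T x` or `x → S x` leaves each vertex at most twice, so a clique on `n`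
vertices has at most `2 * n` edges. For `n = 6` this bound is `12`, fewer than the `15` edges
of `K₆`. The count is carried out on ordered pairs, where it reads `30 ≤ 24`.
-/

/-- The quadratic orbital network on `ZMod p` with the two generators
`T x = x^2 + a` and `S x = x^2 + b` contains no `K₆`: it is 6-clique-free. -/
theorem stmt_6 (p : ℕ) [Fact p.Prime] (a b : ZMod p) :
    (SimpleGraph.fromRel
        (fun x y : ZMod p => y = x ^ 2 + a ∨ y = x ^ 2 + b)).CliqueFree 6 := by
  intro s hs
  -- Each ordered pair of distinct clique vertices is an arc `(x, T x)` or `(x, S x)`, or the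
  -- reverse of one, with tail in `s`: the 30 pairs lie in a union of four images of the 6-set `s`.
  have hsub : s.offDiag ⊆
      (s.image (fun x => (x, x ^ 2 + a)) ∪ s.image (fun x => (x, x ^ 2 + b))) ∪
      (s.image (fun x => (x ^ 2 + a, x)) ∪ s.image (fun x => (x ^ 2 + b, x))) := by
    rintro ⟨x, y⟩ hxy
    obtain ⟨hx, hy, hne⟩ := Finset.mem_offDiag.1 hxy
    have hadj := hs.isClique hx hy hne
    simp only [SimpleGraph.fromRel_adj] at hadj
    simp only [Finset.mem_union, Finset.mem_image, Prod.mk.injEq]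
    rcases hadj.2 with (h | h) | (h | h)
    · exact .inl (.inl ⟨x, hx, rfl, h.symm⟩)
    · exact .inl (.inr ⟨x, hx, rfl, h.symm⟩)
    · exact .inr (.inl ⟨y, hy, h.symm, rfl⟩)
    · exact .inr (.inr ⟨y, hy, h.symm, rfl⟩)
  have hcard := (Finset.card_le_card hsub).trans <| (Finset.card_union_le _ _).trans <|
    Nat.add_le_add
      ((Finset.card_union_le _ _).trans
        (Nat.add_le_add Finset.card_image_le Finset.card_image_le))
      ((Finset.card_union_le _ _).trans
        (Nat.add_le_add Finset.card_image_le Finset.card_image_le))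
  rw [Finset.offDiag_card, hs.card_eq] at hcard
  omega
end

section
/- There exists a natural number N such that for every prime p ≥ N and all distinct elements a, b of ZMod p, the quadratic orbital network G on ZMod p with the two generators T(x) = x^2 + a and S(x) = x^2 + b has negative Euler characteristic: χ(G) < 0. -/
/-!
The network has `p` vertices and about `2p` edges, while everything of higher dimension is
confined to boundedly many vertices.

* Edges. Each vertex `x` sends two arcs, to `x ^ 2 + a` and `x ^ 2 + b`. Two arcs span the same
  edge only along a 2-cycle, so loops and coincidences occur only at solutions of
  `x = x ^ 2 + c` or `x = (x ^ 2 + c) ^ 2 + d` with `c, d ∈ {a, b}`: at most `20` vertices. Hence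
  there are at least `2 * (p - 20)` edges (`card_cliqueFinset_two`).
* Triangles. A triangle is either a 3-cycle, whose vertices solve an equation of degree `8`, or
  transitive `x → y → z`, `x → z`, and then `(x ^ 2 + c) ^ 2 + d = x ^ 2 + e` has degree `4`.
  So all triangles, and therefore all cliques with at least three vertices, live inside a vertex
  set of size at most `3 * 96` (`exists_triangle_support`); there are at most `2 ^ (3 * 96)` of them.

Thus `χ ≤ p - 2 * (p - 20) + 2 ^ (3 * 96)`, which is negative for large `p`. The bounds are proved
over an arbitrary finite field.
-/

open Polynomial in
lemma card_filter_eval_eq_zero_le {F : Type*} [Field F] [Fintype F] [DecidableEq F] (f : F[X]) (n : ℕ)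
    (hn : 0 < n) (hf : f.natDegree = n) :
    (Finset.univ.filter fun x : F => f.eval x = 0).card ≤ n := by
  have h0 : f ≠ 0 := by
    rintro rfl
    simp at hf
    omega
  refine (Finset.card_le_card (t := f.roots.toFinset) ?_).trans ?_
  · intro x hx
    simpa [h0] using hx
  · exact (Multiset.toFinset_card_le _).trans (hf ▸ f.card_roots')

section

variable {F : Type*} [Field F] [Fintype F] [DecidableEq F]

open Polynomial in
lemma card_fixed_le (c : F) : (Finset.univ.filter fun x : F => x = x ^ 2 + c).card ≤ 2 := by
  refine le_trans (le_of_eq ?_)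
    (card_filter_eval_eq_zero_le (X ^ 2 + C c - X : F[X]) 2 (by norm_num) (by compute_degree!))
  congr 1; ext x
  simp only [Finset.mem_filter]
  rw [eq_comm (a := x)]
  simp only [eval_sub, eval_add, eval_pow, eval_X, eval_C, sub_eq_zero]

open Polynomial in
lemma card_two_cycle_le (c d : F) :
    (Finset.univ.filter fun x : F => x = (x ^ 2 + c) ^ 2 + d).card ≤ 4 := by
  refine le_trans (le_of_eq ?_)
    (card_filter_eval_eq_zero_le ((X ^ 2 + C c) ^ 2 + C d - X : F[X]) 4 (by norm_num)
      (by compute_degree!))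
  congr 1; ext x
  simp only [Finset.mem_filter]
  rw [eq_comm (a := x)]
  simp only [eval_sub, eval_add, eval_pow, eval_X, eval_C, sub_eq_zero]

open Polynomial in
lemma card_three_cycle_le (c d e : F) :
    (Finset.univ.filter fun x : F => x = ((x ^ 2 + c) ^ 2 + d) ^ 2 + e).card ≤ 8 := by
  refine le_trans (le_of_eq ?_)
    (card_filter_eval_eq_zero_le (((X ^ 2 + C c) ^ 2 + C d) ^ 2 + C e - X : F[X]) 8 (by norm_num)
      (by compute_degree!))
  congr 1; ext x
  simp only [Finset.mem_filter]
  rw [eq_comm (a := x)]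
  simp only [eval_sub, eval_add, eval_pow, eval_X, eval_C, sub_eq_zero]

open Polynomial in
lemma card_transitive_le (c d e : F) :
    (Finset.univ.filter fun x : F => x ^ 2 + e = (x ^ 2 + c) ^ 2 + d).card ≤ 4 := by
  refine le_trans (le_of_eq ?_)
    (card_filter_eval_eq_zero_le ((X ^ 2 + C c) ^ 2 + C d - (X ^ 2 + C e) : F[X]) 4 (by norm_num)
      (by compute_degree!))
  congr 1; ext x
  simp only [Finset.mem_filter]
  rw [eq_comm (a := x ^ 2 + e)]
  simp only [eval_sub, eval_add, eval_pow, eval_X, eval_C, sub_eq_zero]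

/-- The quadratic orbital network on `F` with generators `x ^ 2 + a` and `x ^ 2 + b`. -/
abbrev network (a b : F) : SimpleGraph F :=
  SimpleGraph.fromRel (fun x y : F => y = x ^ 2 + a ∨ y = x ^ 2 + b)

/-- All but at most `20` vertices contribute two edges `{x, x ^ 2 + a}`, `{x, x ^ 2 + b}` that no
other vertex contributes. -/
lemma card_cliqueFinset_two (a b : F) (hab : a ≠ b)
    [DecidableRel (network a b).Adj] :
    2 * Fintype.card F ≤ ((network a b).cliqueFinset 2).card + 40 := by
  let K : Finset F := {a, b}
  have hK : K.card = 2 := Finset.card_pair hab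
  let B : Finset F := (K.biUnion fun c => Finset.univ.filter fun x : F => x = x ^ 2 + c) ∪
    K.biUnion fun c => K.biUnion fun d => Finset.univ.filter fun x : F => x = (x ^ 2 + c) ^ 2 + d
  have hB : B.card ≤ 20 := by
    refine (Finset.card_union_le _ _).trans (show _ ≤ 4 + 16 from add_le_add ?_ ?_)
    · refine (Finset.card_biUnion_le_card_mul _ _ 2 fun c _ => card_fixed_le c).trans ?_
      omega
    · refine (Finset.card_biUnion_le_card_mul _ _ 8 fun c _ =>
        (Finset.card_biUnion_le_card_mul _ _ 4 fun d _ => card_two_cycle_le c d).trans ?_).trans ?_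
      all_goals omega
  have hB1 : ∀ x ∉ B, ∀ c ∈ K, x ≠ x ^ 2 + c := by
    intro x hx c hc h
    refine hx (Finset.mem_union_left _ (Finset.mem_biUnion.2 ⟨c, hc, ?_⟩))
    exact Finset.mem_filter.2 ⟨Finset.mem_univ _, h⟩
  have hB2 : ∀ x ∉ B, ∀ c ∈ K, ∀ d ∈ K, x ≠ (x ^ 2 + c) ^ 2 + d := by
    intro x hx c hc d hd h
    refine hx (Finset.mem_union_right _ (Finset.mem_biUnion.2 ⟨c, hc,
      Finset.mem_biUnion.2 ⟨d, hd, ?_⟩⟩))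
    exact Finset.mem_filter.2 ⟨Finset.mem_univ _, h⟩
  have key : (Bᶜ ×ˢ K).card ≤ ((network a b).cliqueFinset 2).card := by
    refine Finset.card_le_card_of_injOn (fun q => {q.1, q.1 ^ 2 + q.2}) ?_ ?_
    · rintro ⟨x, c⟩ hq
      simp only [Finset.coe_product, Set.mem_prod, Finset.mem_coe, Finset.mem_compl] at hq
      obtain ⟨hx, hc⟩ := hq
      have hne := hB1 x hx c hc
      have hc' : c = a ∨ c = b := by simpa [K] using hc
      simp only [Finset.mem_coe, SimpleGraph.mem_cliqueFinset_iff]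
      refine ⟨?_, Finset.card_pair hne⟩
      rw [Finset.coe_pair, SimpleGraph.isClique_pair]
      intro _
      refine (SimpleGraph.fromRel_adj _ _ _).2 ⟨hne, Or.inl ?_⟩
      rcases hc' with rfl | rfl <;> simp
    · rintro ⟨x, c⟩ hq ⟨y, d⟩ hr h
      change ({x, x ^ 2 + c} : Finset F) = {y, y ^ 2 + d} at h
      simp only [Finset.coe_product, Set.mem_prod, Finset.mem_coe, Finset.mem_compl] at hq hr
      have hx : x ∈ ({y, y ^ 2 + d} : Finset F) := by rw [← h]; simp
      have hxc : x ^ 2 + c ∈ ({y, y ^ 2 + d} : Finset F) := by rw [← h]; simp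
      have hy : y ∈ ({x, x ^ 2 + c} : Finset F) := by
        have : y ∈ ({y, y ^ 2 + d} : Finset F) := by simp
        rwa [← h] at this
      have h1 := hB1 x hq.1 c hq.2
      have h2 := hB2 x hq.1 c hq.2 d hr.2
      simp only [Finset.mem_insert, Finset.mem_singleton] at hx hxc hy
      have hxy : y = x := by
        rcases hy with hy | hy
        · exact hy
        · rcases hx with hx | hx
          · exact hx.symm
          · exact absurd (hy ▸ hx) h2
      subst hxy
      rcases hxc with hxc | hxc
      · exact absurd hxc.symm h1
      · rw [add_left_cancel hxc]
  rw [Finset.card_product, Finset.card_compl, hK] at key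
  omega

/-- A set of bounded size that contains every vertex of every triangle. -/
lemma exists_triangle_support (a b : F) :
    ∃ W : Finset F, W.card ≤ 3 * 96 ∧ ∀ x y z : F, (network a b).Adj x y → (network a b).Adj x z →
      (network a b).Adj y z → x ∈ W := by
  let K : Finset F := {a, b}
  have hK : K.card ≤ 2 := Finset.card_le_two
  let S : Finset F := (K.biUnion fun c => K.biUnion fun d => K.biUnion fun e =>
      Finset.univ.filter fun x : F => x = ((x ^ 2 + c) ^ 2 + d) ^ 2 + e) ∪
    K.biUnion fun c => K.biUnion fun d => K.biUnion fun e =>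
      Finset.univ.filter fun x : F => x ^ 2 + e = (x ^ 2 + c) ^ 2 + d
  have hS : S.card ≤ 96 := by
    refine (Finset.card_union_le _ _).trans (show _ ≤ 64 + 32 from add_le_add ?_ ?_)
    · refine (Finset.card_biUnion_le_card_mul _ _ 32 fun c _ =>
        (Finset.card_biUnion_le_card_mul _ _ 16 fun d _ =>
          (Finset.card_biUnion_le_card_mul _ _ 8 fun e _ =>
            card_three_cycle_le c d e).trans ?_).trans ?_).trans ?_
      all_goals omega
    · refine (Finset.card_biUnion_le_card_mul _ _ 16 fun c _ =>
        (Finset.card_biUnion_le_card_mul _ _ 8 fun d _ =>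
          (Finset.card_biUnion_le_card_mul _ _ 4 fun e _ =>
            card_transitive_le c d e).trans ?_).trans ?_).trans ?_
      all_goals omega
  have hcyc : ∀ x y z : F, (∃ c ∈ K, y = x ^ 2 + c) → (∃ c ∈ K, z = y ^ 2 + c) →
      (∃ c ∈ K, x = z ^ 2 + c) → x ∈ S := by
    rintro x y z ⟨c, hc, rfl⟩ ⟨d, hd, rfl⟩ ⟨e, he, h⟩
    refine Finset.mem_union_left _ (Finset.mem_biUnion.2 ⟨c, hc, Finset.mem_biUnion.2 ⟨d, hd,
      Finset.mem_biUnion.2 ⟨e, he, Finset.mem_filter.2 ⟨Finset.mem_univ _, h⟩⟩⟩⟩)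
  have htr : ∀ x y z : F, (∃ c ∈ K, y = x ^ 2 + c) → (∃ c ∈ K, z = y ^ 2 + c) →
      (∃ c ∈ K, z = x ^ 2 + c) → x ∈ S := by
    rintro x y z ⟨c, hc, rfl⟩ ⟨d, hd, rfl⟩ ⟨e, he, h⟩
    refine Finset.mem_union_right _ (Finset.mem_biUnion.2 ⟨c, hc, Finset.mem_biUnion.2 ⟨d, hd,
      Finset.mem_biUnion.2 ⟨e, he, Finset.mem_filter.2 ⟨Finset.mem_univ _, h.symm⟩⟩⟩⟩)
  refine ⟨S ∪ (S.image (fun x => x ^ 2 + a) ∪ S.image fun x => x ^ 2 + b), ?_, ?_⟩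
  · have h1 := Finset.card_union_le S (S.image (fun x => x ^ 2 + a) ∪ S.image fun x => x ^ 2 + b)
    have h2 := Finset.card_union_le (S.image fun x => x ^ 2 + a) (S.image fun x => x ^ 2 + b)
    have h3 := Finset.card_image_le (s := S) (f := fun x => x ^ 2 + a)
    have h4 := Finset.card_image_le (s := S) (f := fun x => x ^ 2 + b)
    omega
  · have hself : ∀ x ∈ S, x ∈ S ∪ (S.image (fun x => x ^ 2 + a) ∪ S.image fun x => x ^ 2 + b) :=
      fun x hx => Finset.mem_union_left _ hx
    have himg : ∀ x y, x ∈ S → (∃ c ∈ K, y = x ^ 2 + c) →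
        y ∈ S ∪ (S.image (fun x => x ^ 2 + a) ∪ S.image fun x => x ^ 2 + b) := by
      rintro x y hx ⟨c, hc, rfl⟩
      have hc' : c = a ∨ c = b := by simpa [K] using hc
      refine Finset.mem_union_right _ ?_
      rcases hc' with rfl | rfl
      · exact Finset.mem_union_left _ (Finset.mem_image_of_mem (fun x => x ^ 2 + c) hx)
      · exact Finset.mem_union_right _ (Finset.mem_image_of_mem (fun x => x ^ 2 + c) hx)
    have hadj : ∀ x y, (network a b).Adj x y →
        (∃ c ∈ K, y = x ^ 2 + c) ∨ (∃ c ∈ K, x = y ^ 2 + c) := by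
      intro x y h
      simpa [K] using ((SimpleGraph.fromRel_adj _ _ _).1 h).2
    intro x y z hxy hxz hyz
    -- Six of the eight orientations are transitive, the other two are the 3-cycles.
    rcases hadj _ _ hxy with h1 | h1 <;> rcases hadj _ _ hxz with h2 | h2 <;>
      rcases hadj _ _ hyz with h3 | h3
    · exact hself _ (htr x y z h1 h3 h2)
    · exact hself _ (htr x z y h2 h3 h1)
    · exact hself _ (hcyc x y z h1 h3 h2)
    · exact himg z x (htr z x y h2 h1 h3) h2
    · exact himg y x (htr y x z h1 h2 h3) h1
    · exact hself _ (hcyc x z y h2 h3 h1)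
    · exact himg y x (htr y z x h3 h2 h1) h1
    · exact himg z x (htr z y x h3 h1 h2) h2

/-- The numbers of cliques with at least three vertices add up to a bounded quantity. -/
lemma sum_card_cliqueFinset_le (a b : F) [DecidableRel (network a b).Adj] (n : ℕ) :
    ∑ k ∈ Finset.range n, ((network a b).cliqueFinset (k + 3)).card ≤ 2 ^ (3 * 96) := by
  obtain ⟨W, hW, hmem⟩ := exists_triangle_support a b
  rw [← Finset.card_biUnion]
  · refine le_trans ?_ (Nat.pow_le_pow_right (by norm_num) hW)
    rw [← Finset.card_powerset]
    refine Finset.card_le_card fun s hs => Finset.mem_powerset.2 fun x hx => ?_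
    obtain ⟨k, -, hk⟩ := Finset.mem_biUnion.1 hs
    rw [SimpleGraph.mem_cliqueFinset_iff] at hk
    have h2 : 1 < (s.erase x).card := by
      rw [Finset.card_erase_of_mem hx, hk.card_eq]
      omega
    obtain ⟨y, hy, z, hz, hyz⟩ := Finset.one_lt_card.1 h2
    rw [Finset.mem_erase] at hy hz
    exact hmem x y z (hk.isClique hx hy.2 hy.1.symm) (hk.isClique hx hz.2 hz.1.symm)
      (hk.isClique hy.2 hz.2 hyz)
  · intro i _ j _ hij
    refine Finset.disjoint_left.2 fun s hs ht => hij ?_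
    rw [SimpleGraph.mem_cliqueFinset_iff] at hs ht
    have := hs.card_eq.symm.trans ht.card_eq
    omega

lemma card_cliqueFinset_one_le (a b : F) [DecidableRel (network a b).Adj] :
    ((network a b).cliqueFinset 1).card ≤ Fintype.card F := by
  calc _ ≤ (Finset.powersetCard 1 (Finset.univ : Finset F)).card := by
        refine Finset.card_le_card fun s hs => ?_
        rw [SimpleGraph.mem_cliqueFinset_iff] at hs
        exact Finset.mem_powersetCard.2 ⟨Finset.subset_univ _, hs.card_eq⟩
    _ = Fintype.card F := by simp

lemma euler_characteristic_neg (a b : F) (hab : a ≠ b)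
    [DecidableRel (network a b).Adj] (hF : 2 ^ (3 * 96) + 41 ≤ Fintype.card F) (n : ℕ) :
    ∑ k ∈ Finset.range (n + 2), (-1 : ℤ) ^ k * (((network a b).cliqueFinset (k + 1)).card : ℤ)
      < 0 := by
  rw [Finset.sum_range_succ', Finset.sum_range_succ']
  have h1 := card_cliqueFinset_one_le a b
  have h2 := card_cliqueFinset_two a b hab
  have h3 := sum_card_cliqueFinset_le a b n
  have h4 : ∑ k ∈ Finset.range n, (-1 : ℤ) ^ (k + 1 + 1) *
      (((network a b).cliqueFinset (k + 1 + 1 + 1)).card : ℤ) ≤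
      ∑ k ∈ Finset.range n, (((network a b).cliqueFinset (k + 3)).card : ℤ) := by
    refine Finset.sum_le_sum fun k _ => ?_
    have : (0 : ℤ) ≤ (((network a b).cliqueFinset (k + 3)).card : ℤ) := Nat.cast_nonneg _
    rcases neg_one_pow_eq_or ℤ (k + 1 + 1) with h | h <;> rw [h] <;>
      simp only [add_assoc, Nat.reduceAdd] <;> linarith
  have h5 : (∑ k ∈ Finset.range n, (((network a b).cliqueFinset (k + 3)).card : ℤ)) ≤
      ((2 ^ (3 * 96) : ℕ) : ℤ) := by exact_mod_cast h3
  generalize 2 ^ (3 * 96) = M at h3 h5 hF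
  simp only [zero_add, pow_one, pow_zero, one_mul, neg_mul, Nat.reduceAdd]
  omega

end

open scoped Classical

/-- There is a threshold `N` such that for every prime `p ≥ N` and all distinct
`a b : ZMod p`, the quadratic orbital network with the two generators `x^2 + a` and
`x^2 + b` has negative Euler characteristic. -/
theorem stmt_8 :
    ∃ N : ℕ, ∀ p : ℕ, (hp : p.Prime) → N ≤ p → ∀ a b : ZMod p, a ≠ b →
      letI : NeZero p := ⟨hp.ne_zero⟩
      (∑ k ∈ Finset.range (p + 1), (-1 : ℤ) ^ k *
        (((SimpleGraph.fromRel
            (fun x y : ZMod p => y = x ^ 2 + a ∨ y = x ^ 2 + b)).cliqueFinset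
              (k + 1)).card : ℤ)) < 0 := by
  refine ⟨2 ^ (3 * 96) + 41, fun p hp hN a b hab => ?_⟩
  have : Fact p.Prime := ⟨hp⟩
  obtain ⟨n, hn⟩ : ∃ n, p + 1 = n + 2 := ⟨p - 1, by have := hp.pos; omega⟩
  rw [hn]
  exact euler_characteristic_neg a b hab (by rwa [ZMod.card]) n
end

section
/- Fix natural numbers d ≥ 1 and m ≥ 2. There exists a constant C (depending only on d and m, and in particular independent of p) such that for every prime p and every choice of elements a_1, …, a_d of ZMod p, the quadratic orbital network G on ZMod p with generators T_i(x) = x^2 + a_i contains at most C complete subgraphs K_{m+1}; that is, the number of (m+1)-cliques of G is at most C. -/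
/-!
The edges of a triangle, oriented by the generators, form either a transitive or a cyclic tournament.
In the transitive case the source `x` satisfies `T_j (T_i x) = T_k x`, a monic equation of degree 4;
in the cyclic case every vertex satisfies `T_k (T_j (T_i x)) = x`, a monic equation of degree 8.
So, independently of the field, all but boundedly many vertices are excluded as a source or a cyclic
vertex (`card_triangleRoots_le`), and each vertex of a triangle is such a root or the image of one
under a generator (`mem_triangleVertices`). Every vertex of an `(m+1)`-clique with `m ≥ 2` lies in a
triangle, so all these cliques are subsets of one vertex set of bounded size.
-/

open scoped Classical

open Polynomial in
/-- The elements `x` of the field for which, for some `i`, `j`, `k`, either `T_j (T_i x) = T_k x` or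
`T_k (T_j (T_i x)) = x`, where `T_i x = x ^ 2 + a i`. -/
noncomputable def triangleRoots {F : Type*} [Field F] {d : ℕ} (a : Fin d → F) : Finset F :=
  Finset.univ.biUnion fun t : Fin d × Fin d × Fin d =>
    ((X ^ 2 + C (a t.1)) ^ 2 + C (a t.2.1) - (X ^ 2 + C (a t.2.2)) : F[X]).roots.toFinset ∪
    (((X ^ 2 + C (a t.1)) ^ 2 + C (a t.2.1)) ^ 2 + C (a t.2.2) - X : F[X]).roots.toFinset

/-- The elements of `triangleRoots a` together with their images under the generators. -/
noncomputable def triangleVertices {F : Type*} [Field F] {d : ℕ} (a : Fin d → F) : Finset F :=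
  triangleRoots a ∪ Finset.univ.biUnion fun i => (triangleRoots a).image fun x => x ^ 2 + a i

section

open Polynomial

variable {F : Type*} [Field F]

lemma natDegree_transitive (u v w : F) :
    ((X ^ 2 + C u) ^ 2 + C v - (X ^ 2 + C w) : F[X]).natDegree = 4 := by
  compute_degree!

lemma natDegree_cyclic (u v w : F) :
    (((X ^ 2 + C u) ^ 2 + C v) ^ 2 + C w - X : F[X]).natDegree = 8 := by
  compute_degree!

lemma card_triangleRoots_le {d : ℕ} (a : Fin d → F) :
    (triangleRoots a).card ≤ d ^ 3 * 12 := by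
  have h : (Finset.univ : Finset (Fin d × Fin d × Fin d)).card = d ^ 3 := by
    simp [Fintype.card_prod]; ring
  rw [← h]
  refine Finset.card_biUnion_le_card_mul _ _ _ fun t _ => ?_
  refine (Finset.card_union_le _ _).trans (Nat.add_le_add (b := 4) (d := 8) ?_ ?_)
  · exact (Multiset.toFinset_card_le _).trans
      ((card_roots' _).trans (natDegree_transitive _ _ _).le)
  · exact (Multiset.toFinset_card_le _).trans ((card_roots' _).trans (natDegree_cyclic _ _ _).le)

lemma card_triangleVertices_le {d : ℕ} (a : Fin d → F) :
    (triangleVertices a).card ≤ d ^ 3 * 12 + d * (d ^ 3 * 12) := by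
  refine (Finset.card_union_le _ _).trans (Nat.add_le_add (card_triangleRoots_le a) ?_)
  refine (Finset.card_biUnion_le_card_mul _ _ (d ^ 3 * 12) fun i _ => ?_).trans (by simp)
  exact Finset.card_image_le.trans (card_triangleRoots_le a)

lemma mem_triangleRoots_of_transitive {d : ℕ} (a : Fin d → F) {x y z : F}
    (hxy : ∃ i, y = x ^ 2 + a i) (hyz : ∃ i, z = y ^ 2 + a i) (hxz : ∃ i, z = x ^ 2 + a i) :
    x ∈ triangleRoots a := by
  obtain ⟨i, rfl⟩ := hxy
  obtain ⟨j, rfl⟩ := hyz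
  obtain ⟨k, hk⟩ := hxz
  refine Finset.mem_biUnion.2 ⟨(i, j, k), Finset.mem_univ _, Finset.mem_union_left _ ?_⟩
  rw [Multiset.mem_toFinset, mem_roots', IsRoot.def]
  refine ⟨ne_zero_of_natDegree_gt (n := 0) (by rw [natDegree_transitive]; norm_num), ?_⟩
  simp [hk]

lemma mem_triangleRoots_of_cyclic {d : ℕ} (a : Fin d → F) {x y z : F}
    (hxy : ∃ i, y = x ^ 2 + a i) (hyz : ∃ i, z = y ^ 2 + a i) (hzx : ∃ i, x = z ^ 2 + a i) :
    x ∈ triangleRoots a := by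
  obtain ⟨i, rfl⟩ := hxy
  obtain ⟨j, rfl⟩ := hyz
  obtain ⟨k, hk⟩ := hzx
  refine Finset.mem_biUnion.2 ⟨(i, j, k), Finset.mem_univ _, Finset.mem_union_right _ ?_⟩
  rw [Multiset.mem_toFinset, mem_roots', IsRoot.def]
  refine ⟨ne_zero_of_natDegree_gt (n := 0) (by rw [natDegree_cyclic]; norm_num), ?_⟩
  simp [← hk]

lemma mem_triangleVertices {d : ℕ} (a : Fin d → F) {x y z : F}
    (hxy : (∃ i, y = x ^ 2 + a i) ∨ ∃ i, x = y ^ 2 + a i)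
    (hyz : (∃ i, z = y ^ 2 + a i) ∨ ∃ i, y = z ^ 2 + a i)
    (hxz : (∃ i, z = x ^ 2 + a i) ∨ ∃ i, x = z ^ 2 + a i) :
    x ∈ triangleVertices a := by
  have root {u : F} (hu : u ∈ triangleRoots a) : u ∈ triangleVertices a :=
    Finset.mem_union_left _ hu
  have image {u v : F} (hu : u ∈ triangleRoots a) (huv : ∃ i, v = u ^ 2 + a i) :
      v ∈ triangleVertices a := by
    obtain ⟨i, rfl⟩ := huv
    exact Finset.mem_union_right _
      (Finset.mem_biUnion.2 ⟨i, Finset.mem_univ _, Finset.mem_image_of_mem _ hu⟩)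
  rcases hxy with hxy | hyx <;> rcases hyz with hyz | hzy <;> rcases hxz with hxz | hzx
  · exact root (mem_triangleRoots_of_transitive a hxy hyz hxz)
  · exact root (mem_triangleRoots_of_cyclic a hxy hyz hzx)
  · exact root (mem_triangleRoots_of_transitive a hxz hzy hxy)
  · exact image (mem_triangleRoots_of_transitive a hzx hxy hzy) hzx
  · exact image (mem_triangleRoots_of_transitive a hyx hxz hyz) hyx
  · exact image (mem_triangleRoots_of_transitive a hyz hzx hyx) hyx
  · exact root (mem_triangleRoots_of_cyclic a hxz hzy hyx)
  · exact image (mem_triangleRoots_of_transitive a hzy hyx hzx) hzx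

end

/-- For fixed `d ≥ 1` and `m ≥ 2` there is a constant `C`, independent of the prime `p`,
bounding the number of `(m+1)`-cliques of every quadratic orbital network on `ZMod p`
with `d` generators `x^2 + a i`. -/
theorem stmt_11 (d m : ℕ) (hd : 1 ≤ d) (hm : 2 ≤ m) :
    ∃ C : ℕ, ∀ p : ℕ, (hp : p.Prime) → ∀ a : Fin d → ZMod p,
      letI : NeZero p := ⟨hp.ne_zero⟩
      ((SimpleGraph.fromRel
          (fun x y : ZMod p => ∃ i : Fin d, y = x ^ 2 + a i)).cliqueFinset
            (m + 1)).card ≤ C := by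
  refine ⟨2 ^ (d ^ 3 * 12 + d * (d ^ 3 * 12)), fun p hp a => ?_⟩
  have : Fact p.Prime := ⟨hp⟩
  refine le_trans (Finset.card_le_card (t := (triangleVertices a).powerset) fun s hs => ?_) ?_
  · rw [SimpleGraph.mem_cliqueFinset_iff] at hs
    rw [Finset.mem_powerset]
    intro x hx
    have hcard : 1 < (s.erase x).card := by
      rw [Finset.card_erase_of_mem hx, hs.card_eq]
      omega
    obtain ⟨y, hy, z, hz, hyz⟩ := Finset.one_lt_card.1 hcard
    rw [Finset.mem_erase] at hy hz
    exact mem_triangleVertices a (hs.isClique hx hy.2 hy.1.symm).2 (hs.isClique hy.2 hz.2 hyz).2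
      (hs.isClique hx hz.2 hz.1.symm).2
  · rw [Finset.card_powerset]
    exact Nat.pow_le_pow_right two_pos (card_triangleVertices_le a)
end
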